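/- Let T ∈ (0,1). If Z(T) = ∑_{p ∈ dom U} 2^{−|p|/T} is a right-computable real number, then T is weakly Chaitin T-random, i.e., there exists c ∈ ℝ such that T·n − c ≤ H(T_n) for all n ≥ 1. -/

import Mathlib

open Filter

/-- A set of finite binary strings is prefix-free if no element of it is a
prefix of another (distinct) element of it. -/
def PrefixFree (S : Set (List Bool)) : Prop :=
  ∀ p ∈ S, ∀ q ∈ S, p <+: q → p = q

/-- A computer: a partial recursive function from finite binary strings to
finite binary strings whose domain is a prefix-free set. -/
structure Computer where
  f : List Bool →. List Bool
  partrec : Partrec f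
  prefixFree : PrefixFree {p | (f p).Dom}

/-- The domain of a computer. -/
def Computer.domain (C : Computer) : Set (List Bool) := {p | (C.f p).Dom}

/-- A computer `U` is optimal if every computer can be simulated on `U` with
only a constant increase in program length. -/
def IsOptimal (U : Computer) : Prop :=
  ∀ C : Computer, ∃ d : ℕ, ∀ p : List Bool, (C.f p).Dom →
    ∃ p' : List Bool, p'.length ≤ p.length + d ∧ ∀ s, s ∈ C.f p → s ∈ U.f p'

/-- Program-size complexity `H(s)`: the minimal length of a program `p`
with `U(p) = s`. -/
noncomputable def H (U : Computer) (s : List Bool) : ℕ :=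
  sInf {n | ∃ p : List Bool, p.length = n ∧ s ∈ U.f p}

/-- The `n`-th bit (`n ≥ 1`) of the base-two expansion of `x mod 1`
(the expansion chosen with infinitely many zeros). -/
noncomputable def binDigit (x : ℝ) (n : ℕ) : Bool :=
  decide (⌊Int.fract x * 2 ^ n⌋ % 2 = 1)

/-- The first `n` bits of the base-two expansion of `x mod 1` (with
infinitely many zeros). -/
noncomputable def bits (x : ℝ) (n : ℕ) : List Bool :=
  (List.range n).map fun i => binDigit x (i + 1)

/-- A real `x` is weakly Chaitin `D`-random (w.r.t. the computer `U`). -/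
def WeaklyChaitinRandom (U : Computer) (D x : ℝ) : Prop :=
  ∃ c : ℝ, ∀ n : ℕ, 1 ≤ n → D * n - c ≤ (H U (bits x n) : ℝ)

/-- A real `x` is Chaitin `D`-random (w.r.t. the computer `U`). -/
def ChaitinRandom (U : Computer) (D x : ℝ) : Prop :=
  Tendsto (fun n : ℕ => (H U (bits x n) : ℝ) - D * n) atTop atTop

/-- A real `x` is `D`-compressible (w.r.t. the computer `U`). -/
def DCompressible (U : Computer) (D x : ℝ) : Prop :=
  Filter.limsup (fun n : ℕ => (H U (bits x n) : ℝ) / n) atTop ≤ D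

/-- A computable real number. -/
def ComputableReal (T : ℝ) : Prop :=
  ∃ f : ℕ → ℚ, Computable f ∧ ∀ n : ℕ, 1 ≤ n → |T - (f n : ℝ)| < 1 / n

/-- A right-computable real number. -/
def RightComputable (T : ℝ) : Prop :=
  ∃ g : ℕ → ℚ, Computable g ∧ (∀ n, T ≤ (g n : ℝ)) ∧
    Tendsto (fun n => ((g n : ℚ) : ℝ)) atTop (nhds T)

/-- A left-computable real number. -/
def LeftComputable (T : ℝ) : Prop := RightComputable (-T)

/-- The term `2 ^ (-|p| / T)` of the partition function `Z(T)`. -/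
noncomputable def zterm (U : Computer) (T : ℝ) (p : U.domain) : ℝ :=
  (2 : ℝ) ^ (-((p : List Bool).length : ℝ) / T)

/-- The term `|p| ^ Q * 2 ^ (-|p| / T)` of `W(Q,T)`. -/
noncomputable def wterm (U : Computer) (Q T : ℝ) (p : U.domain) : ℝ :=
  ((p : List Bool).length : ℝ) ^ Q * (2 : ℝ) ^ (-((p : List Bool).length : ℝ) / T)

/-- The term `|p| * 2 ^ (-|p| / T)` of `W(1,T)`. -/
noncomputable def wlterm (U : Computer) (T : ℝ) (p : U.domain) : ℝ :=
  ((p : List Bool).length : ℝ) * (2 : ℝ) ^ (-((p : List Bool).length : ℝ) / T)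

/-- The term `|p| ^ 2 * 2 ^ (-|p| / T)` of `W(2,T)`. -/
noncomputable def wsqterm (U : Computer) (T : ℝ) (p : U.domain) : ℝ :=
  ((p : List Bool).length : ℝ) ^ 2 * (2 : ℝ) ^ (-((p : List Bool).length : ℝ) / T)

/-- A lower-computable function `f : ℕ⁺ → [0,∞)` (represented on `ℕ`,
with all conditions imposed on positive arguments). -/
def LowerComputableFun (f : ℕ → ℝ) : Prop :=
  ∃ a : ℕ → ℕ → ℚ, Computable₂ a ∧
    (∀ k n : ℕ, 1 ≤ k → 1 ≤ n → (a k n : ℝ) ≤ f n) ∧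
    (∀ n : ℕ, 1 ≤ n → Tendsto (fun k => ((a k n : ℚ) : ℝ)) atTop (nhds (f n)))

/-- A lower-computable semi-measure on finite binary strings. -/
def LowerComputableSemiMeasure (r : List Bool → ℝ) : Prop :=
  (∀ s, 0 ≤ r s) ∧ (∀ s, r s ≤ 1) ∧ Summable r ∧ (∑' s, r s) ≤ 1 ∧
    ∃ f : ℕ → List Bool → ℚ, Computable₂ f ∧
      (∀ n s, ((f n s : ℚ) : ℝ) ≤ r s) ∧
      (∀ s, Tendsto (fun n => ((f n s : ℚ) : ℝ)) atTop (nhds (r s)))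

/-- A universal probability. -/
def UniversalProbability (m : List Bool → ℝ) : Prop :=
  LowerComputableSemiMeasure m ∧
    ∀ r : List Bool → ℝ, LowerComputableSemiMeasure r →
      ∃ c : ℝ, 0 < c ∧ ∀ s, c * r s ≤ m s

/-!
From the first `n` bits of `T` one gets a rational `x` with `T < x ≤ T + 2 ^ (-n)`. As
`Z(T) < Z(x)`, and `Z(T)` is approximated from above while finite parts of `Z(x)` are approximated
from below, a search finds a finite set `D` of programs whose weights at temperature `x` sum to more
than `Z(T)`. A string that no program in `D` outputs, computed from `D`, has complexity at most
`H(T_n) + d`; so it has a program of length `l ≤ H(T_n) + d` outside `D`, whose weight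
`2 ^ (-l / T)` is part of `Z(T)` but not of the sum over `D`. Passing from `x` to `T` lowers the sum
over `D` by `O(2 ^ (-n))` only, so the missing weight is `O(2 ^ (-n))`, that is, `l ≥ T n - O(1)`.
-/

open scoped Topology

/-! ### Computability of arithmetic on natural and rational numbers -/

section Arithmetic

theorem primrec₂_nat_pow : Primrec₂ ((· ^ ·) : ℕ → ℕ → ℕ) :=
  Primrec₂.unpaired'.1 Nat.Primrec.pow

theorem primrec_list_sum : Primrec (List.sum : List ℕ → ℕ) :=
  (Primrec.list_foldr (f := id) (h := fun (_ : List ℕ) (p : ℕ × ℕ) => p.1 + p.2) Primrec.id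
    (Primrec.const 0) (Primrec.nat_add.comp (Primrec.fst.comp Primrec.snd)
      (Primrec.snd.comp Primrec.snd))).of_eq fun _ => rfl

theorem primrecRel_nat_dvd : PrimrecRel ((· ∣ ·) : ℕ → ℕ → Prop) :=
  (Primrec.eq.comp (Primrec.nat_mod.comp Primrec.snd Primrec.fst) (Primrec.const 0)).of_eq
    fun p => (Nat.dvd_iff_mod_eq_zero (m := p.1) (n := p.2)).symm

theorem findGreatest_dvd_and_dvd (a b : ℕ) :
    Nat.findGreatest (fun d => d ∣ a ∧ d ∣ b) (a + b) = a.gcd b := by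
  refine Nat.findGreatest_eq_iff.2
    ⟨?_, fun _ => ⟨a.gcd_dvd_left b, a.gcd_dvd_right b⟩, fun d hd hle h => hd.not_ge ?_⟩
  · rcases a.eq_zero_or_pos with rfl | ha
    · simp
    · exact (Nat.gcd_le_left b ha).trans (Nat.le_add_right a b)
  · refine Nat.le_of_dvd (Nat.gcd_pos_iff.2 ?_) (Nat.dvd_gcd h.1 h.2)
    omega

theorem primrec₂_nat_gcd : Primrec₂ Nat.gcd :=
  (Primrec.nat_findGreatest Primrec.nat_add (p := fun (p : ℕ × ℕ) d => d ∣ p.1 ∧ d ∣ p.2)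
    ((primrecRel_nat_dvd.comp Primrec.snd (Primrec.fst.comp Primrec.fst)).and
      (primrecRel_nat_dvd.comp Primrec.snd (Primrec.snd.comp Primrec.fst)))).of_eq
    fun p => findGreatest_dvd_and_dvd p.1 p.2

theorem primrec_nat_count {p : ℕ → Prop} [DecidablePred p] (hp : PrimrecPred p) :
    Primrec (Nat.count p) :=
  (Primrec.list_length.comp ((Primrec.listFilter hp).comp Primrec.list_range)).of_eq
    fun _ => List.countP_eq_length_filter.symm

theorem computable_nat_nth {p : ℕ → Prop} (hp : PrimrecPred p) (hinf : {n | p n}.Infinite) :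
    Computable (Nat.nth p) := by
  classical
  have hex (n : ℕ) : ∃ m, p m ∧ Nat.count p m = n :=
    ⟨Nat.nth p n, Nat.nth_mem_of_infinite hinf n, Nat.count_nth_of_infinite hinf n⟩
  have hpred : PrimrecPred fun q : ℕ × ℕ => p q.2 ∧ Nat.count p q.2 = q.1 :=
    (hp.comp Primrec.snd).and
      (Primrec.eq.comp ((primrec_nat_count hp).comp Primrec.snd) Primrec.fst)
  refine (Computable.find (P := fun n m => p m ∧ Nat.count p m = n)
    hpred.computablePred hex).of_eq fun n => ?_
  obtain ⟨hmem, hcount⟩ := Nat.find_spec (hex n)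
  rw [← Nat.nth_count hmem, hcount]

end Arithmetic

section Rational

open Encodable

/-- The code of `a` for `Denumerable.ofEncodableOfInfinite` is the number of original codes
below that of `a`, so the original code is recovered by `Nat.nth`. -/
theorem computable_encode_of_primrecPred_range {α : Type*} [e : Encodable α] [Infinite α]
    (h : PrimrecPred (· ∈ Set.range (encode : α → ℕ))) :
    @Computable α ℕ (@Primcodable.ofDenumerable α (Denumerable.ofEncodableOfInfinite α)) _
      e.encode := by
  classical
  let d : Denumerable α := Denumerable.ofEncodableOfInfinite α
  have hinf : (Set.range e.encode).Infinite := Set.infinite_range_of_injective e.encode_injective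
  have hcount (a : α) :
      d.encode a = Nat.count (· ∈ Set.range e.encode) (e.encode a) := by
    change @Nat.count _ (decidableRangeEncode α) _ = _
    congr
  have hcode : @Computable α ℕ (@Primcodable.ofDenumerable α d) _ d.encode :=
    @Computable.encode α (@Primcodable.ofDenumerable α d)
  refine ((computable_nat_nth h hinf).comp hcode).of_eq fun a => ?_
  rw [hcount, Nat.nth_count ⟨a, rfl⟩]

theorem int_natAbs_eq_encode (z : ℤ) : z.natAbs = (encode z + 1) / 2 := by
  cases z with
  | ofNat n => change n = (2 * n + 1) / 2; omega
  | negSucc n => change n + 1 = (2 * n + 1 + 1) / 2; omega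

theorem mem_range_encode_rat {c : ℕ} : c ∈ Set.range Rat.instEncodable.encode ↔
    0 < c.unpair.2 ∧ ((c.unpair.1 + 1) / 2).Coprime c.unpair.2 := by
  constructor
  · rintro ⟨q, rfl⟩
    change 0 < (Nat.pair (encode q.num) q.den).unpair.2 ∧
      (((Nat.pair (encode q.num) q.den).unpair.1 + 1) / 2).Coprime
        (Nat.pair (encode q.num) q.den).unpair.2
    rw [Nat.unpair_pair, ← int_natAbs_eq_encode]
    exact ⟨q.pos, q.reduced⟩
  · rintro ⟨hpos, hcop⟩
    set z : ℤ := Denumerable.ofNat ℤ c.unpair.1 with hz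
    have hcode : encode z = c.unpair.1 := Denumerable.encode_ofNat _
    rw [← hcode, ← int_natAbs_eq_encode] at hcop
    exact ⟨⟨z, c.unpair.2, hpos.ne', hcop⟩,
      (congrArg (Nat.pair · c.unpair.2) hcode).trans c.pair_unpair⟩

theorem primrecPred_mem_range_encode_rat :
    PrimrecPred (· ∈ Set.range Rat.instEncodable.encode) := by
  have hnum : Primrec fun c : ℕ => (c.unpair.1 + 1) / 2 :=
    Primrec.nat_div.comp (Primrec.succ.comp (Primrec.fst.comp Primrec.unpair)) (Primrec.const 2)
  have hden : Primrec fun c : ℕ => c.unpair.2 := Primrec.snd.comp Primrec.unpair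
  exact ((Primrec.nat_lt.comp (Primrec.const 0) hden).and
    (Primrec.eq.comp (primrec₂_nat_gcd.comp hnum hden) (Primrec.const 1))).of_eq
      fun _ => mem_range_encode_rat.symm

theorem computable_rat_encode : Computable Rat.instEncodable.encode :=
  computable_encode_of_primrecPred_range primrecPred_mem_range_encode_rat

theorem computable_rat_natAbs_num : Computable fun q : ℚ => q.num.natAbs := by
  refine ((Primrec.nat_div.comp (Primrec.succ.comp (Primrec.fst.comp Primrec.unpair))
    (Primrec.const 2)).to_comp.comp computable_rat_encode).of_eq fun q => ?_
  change ((Nat.pair (encode q.num) q.den).unpair.1 + 1) / 2 = q.num.natAbs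
  rw [Nat.unpair_pair, int_natAbs_eq_encode]

theorem computable_rat_den : Computable Rat.den := by
  refine ((Primrec.snd.comp Primrec.unpair).to_comp.comp computable_rat_encode).of_eq fun q => ?_
  change (Nat.pair (encode q.num) q.den).unpair.2 = q.den
  rw [Nat.unpair_pair]

end Rational

/-! ### Stagewise enumeration of a partial recursive function -/

section Enumeration

open Encodable
open Nat.Partrec (Code)

/-- The set of inputs occurring in a finite part of the graph of a function. -/
def graphInputs {α β : Type*} [DecidableEq α] (L : List (α × β)) : Finset α :=
  (L.map Prod.fst).toFinset

theorem mem_graphInputs {α β : Type*} [DecidableEq α] {L : List (α × β)} {a : α} :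
    a ∈ graphInputs L ↔ ∃ b, (a, b) ∈ L := by
  simp [graphInputs]

variable {α β : Type*} [Primcodable α] [Primcodable β] {f : α →. β} {G : ℕ → List (α × β)}

/-- `G k` lists the part of the graph of the partial function `f` found by stage `k` of a primitive
recursive search. Every point of the graph is found eventually, and at most one by each stage. -/
structure EnumeratesGraph (f : α →. β) (G : ℕ → List (α × β)) : Prop where
  primrec : Primrec G
  nodup (k : ℕ) : ((G k).map Prod.fst).Nodup
  length_le (k : ℕ) : (G k).length ≤ k
  sound {k : ℕ} {a : α} {b : β} : (a, b) ∈ G k → b ∈ f a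
  complete {a : α} {b : β} : b ∈ f a → ∀ᶠ k in atTop, (a, b) ∈ G k

/-- The input with code `i`, together with the output computed on it by `c` within `k` steps. -/
def evalEntry (α β : Type*) [Primcodable α] [Primcodable β] (c : Code) (k i : ℕ) :
    Option (α × β) :=
  (decode₂ α i).bind fun a => ((c.evaln k i).bind decode).map fun b => (a, b)

theorem mem_evalEntry {c : Code} {k i : ℕ} {a : α} {b : β} :
    (a, b) ∈ evalEntry α β c k i ↔
      encode a = i ∧ ∃ m ∈ c.evaln k i, decode m = some b := by
  simp [evalEntry, decode₂_eq_some, Option.bind_eq_some_iff]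

theorem primrec₂_evalEntry (c : Code) : Primrec₂ (evalEntry α β c) := by
  have hevaln : Primrec fun p : ℕ × ℕ => c.evaln p.1 p.2 :=
    Code.primrec_evaln.comp ((Primrec.fst.pair (Primrec.const c)).pair Primrec.snd)
  have hout : Primrec fun p : ℕ × ℕ => (c.evaln p.1 p.2).bind (decode (α := β)) :=
    Primrec.option_bind hevaln (Primrec.decode.comp Primrec.snd)
  exact Primrec.option_bind (Primrec.decode₂.comp Primrec.snd)
    (Primrec.option_map (hout.comp Primrec.fst)
      (Primrec.pair (Primrec.snd.comp Primrec.fst) Primrec.snd))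

theorem exists_enumeratesGraph (hf : Partrec f) :
    ∃ G : ℕ → List (α × β), EnumeratesGraph f G := by
  obtain ⟨c, hc⟩ := Code.exists_code.1 hf
  have eval_encode (a : α) : c.eval (encode a) = (f a).map encode := by simp [hc]
  refine ⟨fun k => (List.range k).filterMap (evalEntry α β c k), ?_, fun k => ?_, fun k => ?_,
    fun {k a b} h => ?_, fun {a b} h => ?_⟩
  · exact Primrec.listFilterMap Primrec.list_range (primrec₂_evalEntry c)
  · rw [List.map_filterMap]
    refine List.nodup_range.filterMap fun i j a hi hj => ?_
    simp only [Option.mem_def, Option.map_eq_some_iff, Prod.exists, exists_and_right,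
      exists_eq_right] at hi hj
    obtain ⟨⟨b, hb⟩, ⟨b', hb'⟩⟩ := hi, hj
    exact (mem_evalEntry.1 hb).1.symm.trans (mem_evalEntry.1 hb').1
  · simpa using List.length_filterMap_le (evalEntry α β c k) (List.range k)
  · obtain ⟨i, -, hi⟩ := List.mem_filterMap.1 h
    obtain ⟨rfl, m, hm, hdec⟩ := mem_evalEntry.1 hi
    have hmem := Code.evaln_sound hm
    rw [eval_encode] at hmem
    obtain ⟨b', hb', rfl⟩ := (Part.mem_map_iff _).1 hmem
    rw [encodek, Option.some_inj] at hdec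
    exact hdec ▸ hb'
  · have hmem : encode b ∈ c.eval (encode a) := by
      rw [eval_encode]
      exact Part.mem_map _ h
    obtain ⟨k₀, hk₀⟩ := Code.evaln_complete.1 hmem
    filter_upwards [eventually_ge_atTop k₀] with k hk
    have hk' := Code.evaln_mono hk hk₀
    exact List.mem_filterMap.2 ⟨encode a, List.mem_range.2 (Code.evaln_bound hk'),
      mem_evalEntry.2 ⟨rfl, _, hk', encodek b⟩⟩

namespace EnumeratesGraph

variable [DecidableEq α]

theorem card_graphInputs_le (hG : EnumeratesGraph f G) (k : ℕ) : (graphInputs (G k)).card ≤ k :=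
  (List.toFinset_card_le _).trans ((List.length_map _).trans_le (hG.length_le k))

theorem dom_of_mem_graphInputs (hG : EnumeratesGraph f G) {k : ℕ} {a : α}
    (h : a ∈ graphInputs (G k)) : (f a).Dom :=
  let ⟨_, hb⟩ := mem_graphInputs.1 h
  Part.dom_iff_mem.2 ⟨_, hG.sound hb⟩

theorem eventually_subset_graphInputs (hG : EnumeratesGraph f G) {F : Finset α}
    (hF : ∀ a ∈ F, (f a).Dom) : ∀ᶠ k in atTop, F ⊆ graphInputs (G k) := by
  refine (eventually_all_finset F).2 fun a ha => ?_
  exact (hG.complete (Part.get_mem (hF a ha))).mono fun _ hk => mem_graphInputs.2 ⟨_, hk⟩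

theorem sum_graphInputs {M : Type*} [AddCommMonoid M] (hG : EnumeratesGraph f G) (w : α → M)
    (k : ℕ) : ∑ a ∈ graphInputs (G k), w a = ((G k).map fun e => w e.1).sum := by
  rw [graphInputs, List.sum_toFinset w (hG.nodup k), List.map_map, Function.comp_def]

theorem mem_outputs_of_mem (hG : EnumeratesGraph f G) {k : ℕ} {a : α} {b : β}
    (ha : a ∈ graphInputs (G k)) (hb : b ∈ f a) : b ∈ (G k).map Prod.snd := by
  obtain ⟨b', hb'⟩ := mem_graphInputs.1 ha
  obtain rfl := Part.mem_unique hb (hG.sound hb')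
  exact List.mem_map_of_mem (f := Prod.snd) hb'

end EnumeratesGraph

/-- A string longer than each string in `L`. -/
def freshString (L : List (List Bool)) : List Bool := true :: L.flatten

theorem freshString_notMem (L : List (List Bool)) : freshString L ∉ L := fun h => by
  have hle := (List.sublist_flatten_of_mem h).length_le
  simp [freshString] at hle

theorem primrec_freshString : Primrec freshString :=
  Primrec.list_cons.comp (Primrec.const true) Primrec.list_flatten

end Enumeration

/-! ### Weights of programs and their dyadic approximations -/

section Weight

/-- The weight `2 ^ (-l / x)` of a program of length `l` at temperature `x`, that is, its term in
the partition function `Z(x)`. -/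
noncomputable def weight (x : ℝ) (l : ℕ) : ℝ := (2 : ℝ) ^ (-(l : ℝ) / x)

theorem weight_pos (x : ℝ) (l : ℕ) : 0 < weight x l := Real.rpow_pos_of_pos two_pos _

theorem weight_one (l : ℕ) : weight 1 l = (1 / 2 : ℝ) ^ l := by
  rw [weight, div_one, Real.rpow_neg two_pos.le, Real.rpow_natCast, one_div, inv_pow]

theorem weight_le_one {x : ℝ} (hx : 0 ≤ x) (l : ℕ) : weight x l ≤ 1 :=
  Real.rpow_le_one_of_one_le_of_nonpos one_le_two
    (div_nonpos_of_nonpos_of_nonneg (neg_nonpos.2 l.cast_nonneg) hx)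

theorem weight_le_weight {x y : ℝ} (hx : 0 < x) (hxy : x ≤ y) (l : ℕ) :
    weight x l ≤ weight y l := by
  refine Real.rpow_le_rpow_of_exponent_le one_le_two ?_
  rw [neg_div, neg_div, neg_le_neg_iff]
  gcongr

theorem weight_lt_weight {x y : ℝ} (hx : 0 < x) (hxy : x < y) {l : ℕ} (hl : 0 < l) :
    weight x l < weight y l := by
  refine Real.rpow_lt_rpow_of_exponent_lt one_lt_two ?_
  rw [neg_div, neg_div, neg_lt_neg_iff]
  gcongr

theorem weight_div_pow {a : ℕ} (ha : a ≠ 0) (m l : ℕ) :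
    weight (a / m) l ^ a = ((2 : ℝ) ^ (l * m))⁻¹ := by
  rw [weight, ← Real.rpow_mul_natCast two_pos.le, div_div_eq_mul_div,
    div_mul_cancel₀ _ (Nat.cast_ne_zero.2 ha), neg_mul, Real.rpow_neg two_pos.le]
  exact_mod_cast rfl

/-- The integer part of `2 ^ k * weight (a / m) l`, computed by integer arithmetic. -/
def floorWeight (k a m l : ℕ) : ℕ :=
  Nat.findGreatest (fun N => N ^ a * 2 ^ (l * m) ≤ 2 ^ (k * a)) (2 ^ k)

theorem pow_mul_two_pow_le_iff {a : ℕ} (ha : a ≠ 0) (k m l N : ℕ) :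
    N ^ a * 2 ^ (l * m) ≤ 2 ^ (k * a) ↔ (N : ℝ) ≤ 2 ^ k * weight (a / m) l := by
  rw [← pow_le_pow_iff_left₀ N.cast_nonneg (mul_pos (by positivity) (weight_pos _ _)).le ha,
    mul_pow, weight_div_pow ha, ← pow_mul, ← div_eq_mul_inv, le_div_iff₀ (by positivity)]
  exact_mod_cast Iff.rfl

theorem floorWeight_eq_floor {a : ℕ} (ha : a ≠ 0) (k m l : ℕ) :
    floorWeight k a m l = ⌊2 ^ k * weight (a / m) l⌋₊ := by
  have hpos : 0 ≤ 2 ^ k * weight (a / m : ℝ) l := (mul_pos (by positivity) (weight_pos _ _)).le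
  refine Nat.findGreatest_eq_iff.2 ⟨Nat.floor_le_of_le ?_, fun _ => ?_, fun N hN _ => ?_⟩
  · push_cast
    exact mul_le_of_le_one_right (by positivity) (weight_le_one (by positivity) l)
  · exact (pow_mul_two_pow_le_iff ha k m l _).2 (Nat.floor_le hpos)
  · rw [pow_mul_two_pow_le_iff ha, not_le]
    exact (Nat.floor_lt hpos).1 hN

theorem sum_floorWeight_le {a : ℕ} (ha : a ≠ 0) (k m : ℕ) (D : Finset (List Bool)) :
    (∑ p ∈ D, floorWeight k a m p.length : ℕ) ≤ 2 ^ k * ∑ p ∈ D, weight (a / m) p.length := by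
  rw [Finset.mul_sum, Nat.cast_sum]
  refine Finset.sum_le_sum fun p _ => ?_
  rw [floorWeight_eq_floor ha]
  exact Nat.floor_le (mul_pos (by positivity) (weight_pos _ _)).le

theorem le_sum_floorWeight_add_card {a : ℕ} (ha : a ≠ 0) (k m : ℕ) (D : Finset (List Bool)) :
    2 ^ k * ∑ p ∈ D, weight (a / m) p.length ≤
      (∑ p ∈ D, floorWeight k a m p.length : ℕ) + D.card := by
  rw [Finset.mul_sum, Nat.cast_sum, ← nsmul_one D.card, ← Finset.sum_const,
    ← Finset.sum_add_distrib]
  refine Finset.sum_le_sum fun p _ => ?_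
  rw [floorWeight_eq_floor ha]
  exact (Nat.lt_floor_add_one _).le

theorem primrec_floorWeight {α : Type*} [Primcodable α] {k a m l : α → ℕ} (hk : Primrec k)
    (ha : Primrec a) (hm : Primrec m) (hl : Primrec l) :
    Primrec fun x => floorWeight (k x) (a x) (m x) (l x) := by
  have two_pow {β : Type _} [Primcodable β] {e : β → ℕ} (he : Primrec e) :
      Primrec fun y => 2 ^ e y := primrec₂_nat_pow.comp (Primrec.const 2) he
  exact Primrec.nat_findGreatest
    (p := fun x N => N ^ a x * 2 ^ (l x * m x) ≤ 2 ^ (k x * a x)) (two_pow hk)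
    (Primrec.nat_le.comp
      (Primrec.nat_mul.comp (primrec₂_nat_pow.comp Primrec.snd (ha.comp Primrec.fst))
        (two_pow ((Primrec.nat_mul.comp hl hm).comp Primrec.fst)))
      (two_pow ((Primrec.nat_mul.comp hk ha).comp Primrec.fst)))

end Weight

/-! ### Binary expansions -/

section BinaryExpansion

/-- The natural number with binary digits `b`, most significant digit first. -/
def binaryValue (b : List Bool) : ℕ := b.foldl (fun v d => 2 * v + d.toNat) 0

theorem primrec_binaryValue : Primrec binaryValue :=
  Primrec.list_foldl (h := fun (_ : List Bool) (p : ℕ × Bool) => 2 * p.1 + p.2.toNat)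
    Primrec.id (Primrec.const 0)
    (Primrec.nat_add.comp
      (Primrec.nat_mul.comp (Primrec.const 2) (Primrec.fst.comp Primrec.snd))
      ((Primrec.dom_finite Bool.toNat).comp (Primrec.snd.comp Primrec.snd)))

/-- The right end of the dyadic interval of reals in `[0, 1)` whose expansion starts with `b`. -/
noncomputable def upperEndpoint (b : List Bool) : ℝ :=
  (binaryValue b + 1 : ℕ) / (2 ^ b.length : ℕ)

theorem length_bits (x : ℝ) (n : ℕ) : (bits x n).length = n := by
  rw [bits, List.length_map, List.length_range]

theorem floor_mul_two_pow_succ_div_two (y : ℝ) (n : ℕ) :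
    ⌊y * 2 ^ (n + 1)⌋ / 2 = ⌊y * 2 ^ n⌋ := by
  have hhalf : y * 2 ^ (n + 1) / (2 : ℕ) = y * 2 ^ n := by
    rw [pow_succ, ← mul_assoc, Nat.cast_ofNat, mul_div_cancel_right₀ _ two_ne_zero]
  rw [← hhalf, Int.floor_div_natCast, Nat.cast_ofNat]

theorem binaryValue_bits (x : ℝ) (n : ℕ) :
    (binaryValue (bits x n) : ℤ) = ⌊Int.fract x * 2 ^ n⌋ := by
  induction n with
  | zero => simp [bits, binaryValue]
  | succ n ih =>
    have hlast : binaryValue (bits x (n + 1)) =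
        2 * binaryValue (bits x n) + (binDigit x (n + 1)).toNat := by
      simp [bits, binaryValue, List.range_succ]
    have hdigit : ((binDigit x (n + 1)).toNat : ℤ) = ⌊Int.fract x * 2 ^ (n + 1)⌋ % 2 := by
      rcases Int.emod_two_eq ⌊Int.fract x * 2 ^ (n + 1)⌋ with h | h <;> simp [binDigit, h]
    rw [hlast, Nat.cast_add, Nat.cast_mul, ih, hdigit, ← floor_mul_two_pow_succ_div_two]
    exact Int.mul_ediv_add_emod _ 2

theorem fract_lt_upperEndpoint_bits (x : ℝ) (n : ℕ) :
    Int.fract x < upperEndpoint (bits x n) := by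
  have hvalue : (binaryValue (bits x n) : ℝ) = ⌊Int.fract x * 2 ^ n⌋ := by
    exact_mod_cast binaryValue_bits x n
  rw [upperEndpoint, length_bits, lt_div_iff₀ (by positivity)]
  push_cast
  rw [hvalue]
  exact Int.lt_floor_add_one _

theorem upperEndpoint_bits_le (x : ℝ) (n : ℕ) :
    upperEndpoint (bits x n) ≤ Int.fract x + (1 / 2) ^ n := by
  have hvalue : (binaryValue (bits x n) : ℝ) = ⌊Int.fract x * 2 ^ n⌋ := by
    exact_mod_cast binaryValue_bits x n
  rw [upperEndpoint, length_bits, div_le_iff₀ (by positivity)]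
  push_cast
  rw [hvalue, add_mul, ← mul_pow, one_div_mul_cancel two_ne_zero, one_pow]
  gcongr
  exact Int.floor_le _

end BinaryExpansion

/-! ### Searching for an output that is not produced by heavy programs -/

section Search

variable {f : List Bool →. List Bool} {g : ℕ → ℚ} {G : ℕ → List (List Bool × List Bool)}

/-- The test, in integer arithmetic, of whether the weights of the programs found by stage `k`,
taken at temperature `upperEndpoint b` and rounded down to multiples of `2 ^ (-k)`, sum to more
than `g k`. The one variable `k` bounds the running time, the precision and the index of `g`. -/
def stageTest (g : ℕ → ℚ) (G : ℕ → List (List Bool × List Bool)) (b : List Bool) (k : ℕ) : Bool :=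
  (g k).num.natAbs * 2 ^ k < (g k).den *
    ((G k).map fun e => floorWeight k (binaryValue b + 1) (2 ^ b.length) e.1.length).sum

theorem computable₂_stageTest (hg : Computable g) (hG : Primrec G) :
    Computable₂ (stageTest g G) := by
  have hgk : Computable fun p : List Bool × ℕ => g p.2 := hg.comp Computable.snd
  have hleft : Computable fun p : List Bool × ℕ => (g p.2).num.natAbs * 2 ^ p.2 :=
    Primrec.nat_mul.to_comp.comp (computable_rat_natAbs_num.comp hgk)
      (primrec₂_nat_pow.comp (Primrec.const 2) Primrec.snd).to_comp
  have hinput : Primrec fun q : (List Bool × ℕ) × List Bool × List Bool => q.1.1 :=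
    Primrec.fst.comp Primrec.fst
  have hfloor : Primrec₂ fun (p : List Bool × ℕ) (e : List Bool × List Bool) =>
      floorWeight p.2 (binaryValue p.1 + 1) (2 ^ p.1.length) e.1.length :=
    primrec_floorWeight (Primrec.snd.comp Primrec.fst)
      (Primrec.succ.comp (primrec_binaryValue.comp hinput))
      (primrec₂_nat_pow.comp (Primrec.const 2) (Primrec.list_length.comp hinput))
      (Primrec.list_length.comp (Primrec.fst.comp Primrec.snd))
  have hright := Primrec.nat_mul.to_comp.comp (computable_rat_den.comp hgk)
    (primrec_list_sum.comp (Primrec.list_map (hG.comp Primrec.snd) hfloor)).to_comp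
  exact Primrec.nat_lt.decide.to_comp.comp hleft hright

theorem natAbs_num_mul_lt_den_mul_iff {q : ℚ} (hq : 0 ≤ q) (m n : ℕ) :
    q.num.natAbs * m < q.den * n ↔ (q : ℝ) * m < n := by
  have hnum : (q.num.natAbs : ℝ) = q.den * q := by
    rw [Nat.cast_natAbs, abs_of_nonneg (Rat.num_nonneg.2 hq)]
    exact_mod_cast (Rat.den_mul_eq_num q).symm
  rw [← mul_lt_mul_iff_right₀ (show (0 : ℝ) < q.den by exact_mod_cast q.pos), ← mul_assoc, ← hnum]
  exact_mod_cast Iff.rfl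

theorem stageTest_iff (hG : EnumeratesGraph f G) {k : ℕ} (hk : 0 ≤ g k) (b : List Bool) :
    stageTest g G b k = true ↔ (g k : ℝ) * 2 ^ k <
      (∑ p ∈ graphInputs (G k), floorWeight k (binaryValue b + 1) (2 ^ b.length) p.length : ℕ) := by
  rw [stageTest, decide_eq_true_iff, natAbs_num_mul_lt_den_mul_iff hk,
    hG.sum_graphInputs fun p => floorWeight k (binaryValue b + 1) (2 ^ b.length) p.length]
  exact_mod_cast Iff.rfl

theorem lt_sum_weight_of_stageTest (hG : EnumeratesGraph f G) {k : ℕ} (hk : 0 ≤ g k)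
    {b : List Bool} (h : stageTest g G b k = true) :
    (g k : ℝ) < ∑ p ∈ graphInputs (G k), weight (upperEndpoint b) p.length := by
  have hlt := ((stageTest_iff hG hk b).1 h).trans_le
    (sum_floorWeight_le (binaryValue b).succ_ne_zero k (2 ^ b.length) _)
  rw [mul_comm] at hlt
  exact lt_of_mul_lt_mul_left hlt (by positivity)

/-- Rounding down costs at most `k / 2 ^ k`, since at most `k` programs are found by stage `k`. -/
theorem eventually_stageTest (hG : EnumeratesGraph f G) (hg : ∀ k, 0 ≤ g k) {z : ℝ}
    (hz : Tendsto (fun k => (g k : ℝ)) atTop (𝓝 z)) {b : List Bool} {F : Finset (List Bool)}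
    (hF : ∀ p ∈ F, (f p).Dom) (hlt : z < ∑ p ∈ F, weight (upperEndpoint b) p.length) :
    ∀ᶠ k in atTop, stageTest g G b k = true := by
  have hlim : Tendsto (fun k : ℕ => (g k : ℝ) + k * (1 / 2) ^ k) atTop (𝓝 (z + 0)) :=
    hz.add (tendsto_self_mul_const_pow_of_lt_one (by norm_num) (by norm_num))
  rw [add_zero] at hlim
  filter_upwards [hlim.eventually_lt_const hlt, hG.eventually_subset_graphInputs hF]
    with k hk hsub
  have hsum : (g k : ℝ) + k * (1 / 2) ^ k <
      ∑ p ∈ graphInputs (G k), weight (upperEndpoint b) p.length :=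
    hk.trans_le (Finset.sum_le_sum_of_subset_of_nonneg hsub fun p _ _ => (weight_pos _ _).le)
  have hround := le_sum_floorWeight_add_card (binaryValue b).succ_ne_zero k (2 ^ b.length)
    (graphInputs (G k))
  have hcard : ((graphInputs (G k)).card : ℝ) ≤ k := by exact_mod_cast hG.card_graphInputs_le k
  have hscaled := mul_lt_mul_of_pos_left hsum (show (0 : ℝ) < 2 ^ k by positivity)
  have hk_eq : (2 : ℝ) ^ k * (k * (1 / 2) ^ k) = k := by
    rw [mul_left_comm, ← mul_pow, mul_one_div_cancel two_ne_zero, one_pow, mul_one]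
  rw [mul_add, hk_eq] at hscaled
  refine (stageTest_iff hG (hg k) b).2 ?_
  rw [upperEndpoint] at hscaled
  linarith

theorem exists_partrec_fresh_output (hf : Partrec f) (hgc : Computable g) (hg : ∀ k, 0 ≤ g k) :
    ∃ φ : List Bool →. List Bool, Partrec φ ∧ ∀ b,
      (∀ t ∈ φ b, ∃ (D : Finset (List Bool)) (k : ℕ), (∀ p ∈ D, (f p).Dom ∧ t ∉ f p) ∧
        (g k : ℝ) < ∑ p ∈ D, weight (upperEndpoint b) p.length) ∧
      ∀ (z : ℝ) (F : Finset (List Bool)), Tendsto (fun k => (g k : ℝ)) atTop (𝓝 z) →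
        (∀ p ∈ F, (f p).Dom) → z < ∑ p ∈ F, weight (upperEndpoint b) p.length → (φ b).Dom := by
  obtain ⟨G, hG⟩ := exists_enumeratesGraph hf
  refine ⟨fun b => (Nat.rfind fun k => Part.some (stageTest g G b k)).map
    fun k => freshString ((G k).map Prod.snd), ?_, fun b => ⟨fun t ht => ?_, ?_⟩⟩
  · exact (Partrec.rfind (computable₂_stageTest hgc hG.primrec).partrec₂).map
      (primrec_freshString.comp (Primrec.list_map (hG.primrec.comp Primrec.snd)
        (Primrec.snd.comp₂ Primrec₂.right))).to_comp
  · obtain ⟨k, hk, rfl⟩ := (Part.mem_map_iff _).1 ht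
    have htest : stageTest g G b k = true := (Part.mem_some_iff.1 (Nat.rfind_spec hk)).symm
    refine ⟨graphInputs (G k), k, fun p hp => ⟨hG.dom_of_mem_graphInputs hp, fun hmem => ?_⟩,
      lt_sum_weight_of_stageTest hG (hg k) htest⟩
    exact freshString_notMem _ (hG.mem_outputs_of_mem hp hmem)
  · intro z F hz hF hlt
    obtain ⟨k, hk⟩ := (eventually_stageTest hG hg hz hF hlt).exists
    exact Nat.rfind_dom.2 ⟨k, Part.mem_some_iff.2 hk.symm, fun _ => trivial⟩

end Search

/-! ### Kraft's inequality for programs and partition functions -/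

section Kraft

variable {S : Set (List Bool)}

namespace PrefixFree

theorem mono {S' : Set (List Bool)} (hS : PrefixFree S) (h : S' ⊆ S) : PrefixFree S' :=
  fun p hp q hq => hS p (h hp) q (h hq)

theorem uniquelyDecodable (hS : PrefixFree S) (hnil : [] ∉ S) :
    InformationTheory.UniquelyDecodable S := by
  have ne_nil_of_mem {p : List Bool} (hp : p ∈ S) : p ≠ [] := fun h => hnil (h ▸ hp)
  intro L₁
  induction L₁ with
  | nil =>
    rintro (_ | ⟨q, L₂⟩) _ h₂ h
    · rfl
    · exact absurd (List.append_eq_nil_iff.1 h.symm).1 (ne_nil_of_mem (h₂ q List.mem_cons_self))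
  | cons p L₁ ih =>
    rintro (_ | ⟨q, L₂⟩) h₁ h₂ h
    · exact absurd (List.append_eq_nil_iff.1 h).1 (ne_nil_of_mem (h₁ p List.mem_cons_self))
    have hp := h₁ p List.mem_cons_self
    have hq := h₂ q List.mem_cons_self
    rw [List.flatten_cons, List.flatten_cons] at h
    obtain rfl : p = q := by
      rcases List.prefix_or_prefix_of_prefix (List.prefix_append p L₁.flatten)
        (h ▸ List.prefix_append q L₂.flatten) with hpq | hqp
      · exact hS p hp q hq hpq
      · exact (hS q hq p hp hqp).symm
    rw [ih L₂ (fun w hw => h₁ w (List.mem_cons_of_mem _ hw))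
      (fun w hw => h₂ w (List.mem_cons_of_mem _ hw)) (List.append_cancel_left h)]

theorem eq_singleton_nil (hS : PrefixFree S) (hnil : [] ∈ S) : S = {[]} :=
  Set.eq_singleton_iff_unique_mem.2
    ⟨hnil, fun q hq => (hS [] hnil q hq List.nil_prefix).symm⟩

theorem sum_half_pow_length_le_one {D : Finset (List Bool)}
    (hD : PrefixFree (D : Set (List Bool))) : ∑ p ∈ D, (1 / 2 : ℝ) ^ p.length ≤ 1 := by
  by_cases hnil : [] ∈ D
  · rw [Finset.coe_eq_singleton.1 (hD.eq_singleton_nil hnil)]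
    simp
  · simpa using InformationTheory.kraft_mcmillan_inequality (hD.uniquelyDecodable hnil)

theorem summable_weight (hS : PrefixFree S) {x : ℝ} (hx : 0 < x) (hx1 : x ≤ 1) :
    Summable fun p : S => weight x (p : List Bool).length := by
  refine summable_of_sum_le (c := 1) (fun p => (weight_pos _ _).le) fun u => ?_
  have hu : PrefixFree (u.map (Function.Embedding.subtype (· ∈ S)) : Set (List Bool)) :=
    hS.mono fun p hp => Finset.property_of_mem_map_subtype u hp
  calc ∑ p ∈ u, weight x (p : List Bool).length
      ≤ ∑ p ∈ u, (1 / 2 : ℝ) ^ (p : List Bool).length :=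
        Finset.sum_le_sum fun p _ => (weight_le_weight hx hx1 _).trans_eq (weight_one _)
    _ = ∑ p ∈ u.map (Function.Embedding.subtype (· ∈ S)), (1 / 2 : ℝ) ^ p.length := by
        rw [Finset.sum_map]
        rfl
    _ ≤ 1 := hu.sum_half_pow_length_le_one

theorem sum_weight_le_tsum (hS : PrefixFree S) {x : ℝ} (hx : 0 < x) (hx1 : x ≤ 1)
    {D : Finset (List Bool)} (hD : ∀ p ∈ D, p ∈ S) :
    ∑ p ∈ D, weight x p.length ≤ ∑' p : S, weight x (p : List Bool).length := by
  classical
  rw [← Finset.sum_subtype_of_mem (fun p => weight x p.length) hD]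
  exact (hS.summable_weight hx hx1).sum_le_tsum _ fun p _ => (weight_pos _ _).le

theorem exists_tsum_weight_lt_sum (hS : PrefixFree S) {p₀ : List Bool} (hp₀ : p₀ ∈ S)
    (hne : p₀ ≠ []) {x y : ℝ} (hx : 0 < x) (hxy : x < y) (hy : y ≤ 1) :
    ∃ F : Finset (List Bool), (∀ p ∈ F, p ∈ S) ∧
      ∑' p : S, weight x (p : List Bool).length < ∑ p ∈ F, weight y p.length := by
  have hsum := hS.summable_weight (hx.trans hxy) hy
  have hlt : ∑' p : S, weight x (p : List Bool).length <
      ∑' p : S, weight y (p : List Bool).length :=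
    (hS.summable_weight hx (hxy.le.trans hy)).tsum_lt_tsum (i := ⟨p₀, hp₀⟩)
      (fun p => weight_le_weight hx hxy.le _)
      (weight_lt_weight hx hxy (List.length_pos_iff.2 hne)) hsum
  obtain ⟨u, hu⟩ := (hsum.hasSum.eventually_const_lt hlt).exists
  refine ⟨u.map (Function.Embedding.subtype (· ∈ S)),
    fun p hp => Finset.property_of_mem_map_subtype u hp, ?_⟩
  rwa [Finset.sum_map]

end PrefixFree

end Kraft

/-! ### Program-size complexity -/

section Complexity

/-- The computer that runs `C` and applies the partial function `φ` to its output. -/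
def Computer.bind (C : Computer) {φ : List Bool →. List Bool} (hφ : Partrec φ) : Computer where
  f p := (C.f p).bind φ
  partrec := C.partrec.bind (hφ.comp Computable.snd)
  prefixFree := C.prefixFree.mono fun _ hp => Part.Dom.of_bind hp

/-- The computer whose only program is the empty string, with output `s`. -/
def Computer.single (s : List Bool) : Computer where
  f p := ((if p = [] then some s else none : Option (List Bool)) : Part (List Bool))
  partrec := Computable.ofOption (Primrec.ite (Primrec.eq.comp Primrec.id (Primrec.const []))
    (Primrec.const (some s)) (Primrec.const none)).to_comp
  prefixFree := by
    have eq_nil {p : List Bool}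
        (hp : ((if p = [] then some s else none : Option (List Bool)) : Part (List Bool)).Dom) :
        p = [] := by
      by_contra h
      simp [h] at hp
    exact fun p hp q hq _ => (eq_nil hp).trans (eq_nil hq).symm

theorem H_le_length {U : Computer} {s p : List Bool} (h : s ∈ U.f p) : H U s ≤ p.length :=
  Nat.sInf_le ⟨p, rfl, h⟩

namespace IsOptimal

variable {U : Computer}

theorem exists_mem (hU : IsOptimal U) (s : List Bool) : ∃ p, s ∈ U.f p := by
  obtain ⟨d, hd⟩ := hU (Computer.single s)
  obtain ⟨p, -, hp⟩ := hd [] trivial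
  exact ⟨p, hp s (Part.mem_some s)⟩

theorem exists_mem_length_eq_H (hU : IsOptimal U) (s : List Bool) :
    ∃ p, s ∈ U.f p ∧ p.length = H U s := by
  obtain ⟨p, hp⟩ := hU.exists_mem s
  obtain ⟨q, hlen, hq⟩ :=
    Nat.sInf_mem (s := {n | ∃ p : List Bool, p.length = n ∧ s ∈ U.f p}) ⟨_, p, rfl, hp⟩
  exact ⟨q, hq, hlen⟩

theorem exists_mem_domain_ne_nil (hU : IsOptimal U) : ∃ p ∈ U.domain, p ≠ [] := by
  by_contra! h
  have mem_nil (s : List Bool) : s ∈ U.f [] := by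
    obtain ⟨p, hp⟩ := hU.exists_mem s
    exact h p (Part.dom_iff_mem.2 ⟨s, hp⟩) ▸ hp
  exact List.cons_ne_nil true [] (Part.mem_unique (mem_nil [true]) (mem_nil []))

theorem exists_H_le_add (hU : IsOptimal U) {φ : List Bool →. List Bool} (hφ : Partrec φ) :
    ∃ d : ℕ, ∀ s t, t ∈ φ s → H U t ≤ H U s + d := by
  obtain ⟨d, hd⟩ := hU (U.bind hφ)
  refine ⟨d, fun s t ht => ?_⟩
  obtain ⟨p, hp, hlen⟩ := hU.exists_mem_length_eq_H s
  have hmem : t ∈ (U.bind hφ).f p := Part.mem_bind hp ht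
  obtain ⟨q, hq, hqout⟩ := hd p (Part.dom_iff_mem.2 ⟨t, hmem⟩)
  exact (H_le_length (hqout t hmem)).trans (hlen ▸ hq)

end IsOptimal

end Complexity

/-! ### Varying the temperature -/

section Temperature

theorem weight_eq_weight_mul_exp (x y : ℝ) (l : ℕ) :
    weight x l = weight y l * Real.exp (-(Real.log 2 * l * (1 / x - 1 / y))) := by
  rw [weight, weight, Real.rpow_def_of_pos two_pos, Real.rpow_def_of_pos two_pos, ← Real.exp_add]
  ring_nf

theorem weight_sub_weight_le (x y : ℝ) (l : ℕ) :
    weight y l - weight x l ≤ Real.log 2 * l * (1 / x - 1 / y) * weight y l := by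
  have hexp := mul_le_mul_of_nonneg_left
    (Real.add_one_le_exp (-(Real.log 2 * l * (1 / x - 1 / y)))) (weight_pos y l).le
  rw [weight_eq_weight_mul_exp x y]
  linarith

theorem log_two_mul_weight_le {x : ℝ} (hx : 0 < x) (hx1 : x < 1) (l : ℕ) :
    Real.log 2 * l * weight x l ≤ (1 / x - 1)⁻¹ * (1 / 2) ^ l := by
  set e := 1 / x - 1 with he
  have he_pos : 0 < e := sub_pos.2 (one_lt_one_div hx hx1)
  set s := Real.log 2 * l * e with hs
  have hs_le : s * Real.exp (-s) ≤ 1 :=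
    (Real.mul_exp_neg_le_exp_neg_one s).trans (Real.exp_le_one_iff.2 (by norm_num))
  have hweight : weight x l = (1 / 2) ^ l * Real.exp (-s) := by
    rw [weight_eq_weight_mul_exp x 1, weight_one, one_div_one, ← he]
  calc Real.log 2 * l * weight x l
      = e⁻¹ * (1 / 2) ^ l * (s * Real.exp (-s)) := by
        rw [hweight, hs]
        field_simp
    _ ≤ e⁻¹ * (1 / 2) ^ l := mul_le_of_le_one_right (by positivity) hs_le

theorem one_div_sub_one_div_le {x y : ℝ} (hx : 0 < x) (hxy : x ≤ y) :
    1 / x - 1 / y ≤ (y - x) / x ^ 2 := by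
  rw [div_sub_div _ _ hx.ne' (hx.trans_le hxy).ne', one_mul, mul_one, sq]
  exact div_le_div_of_nonneg_left (sub_nonneg.2 hxy) (by positivity) (by gcongr)

/-- Since `t < 1`, the weight decays exponentially faster than the term `2 ^ (-l)` of Kraft's sum,
which absorbs the factor `l` of its derivative in the temperature. -/
theorem exists_weight_sub_weight_le {T t : ℝ} (hT : 0 < T) (hTt : T ≤ t) (ht : t < 1) :
    ∃ K : ℝ, 0 < K ∧ ∀ x, T ≤ x → x ≤ t → ∀ l,
      weight x l - weight T l ≤ K * (x - T) * (1 / 2) ^ l := by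
  have ht0 : 0 < t := hT.trans_le hTt
  have hgap : 0 < 1 / t - 1 := sub_pos.2 (one_lt_one_div ht0 ht)
  refine ⟨(1 / t - 1)⁻¹ / T ^ 2, by positivity, fun x hTx hxt l => ?_⟩
  have hx : 0 < x := hT.trans_le hTx
  have hdiff : 0 ≤ 1 / T - 1 / x := sub_nonneg.2 (one_div_le_one_div_of_le hT hTx)
  calc weight x l - weight T l
      ≤ Real.log 2 * l * (1 / T - 1 / x) * weight x l := weight_sub_weight_le T x l
    _ ≤ Real.log 2 * l * (1 / T - 1 / x) * weight t l := by
        gcongr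
        exact weight_le_weight hx hxt l
    _ = Real.log 2 * l * weight t l * (1 / T - 1 / x) := by ring
    _ ≤ (1 / t - 1)⁻¹ * (1 / 2) ^ l * ((x - T) / T ^ 2) :=
        mul_le_mul (log_two_mul_weight_le ht0 ht l) (one_div_sub_one_div_le hT hTx) hdiff
          (by positivity)
    _ = (1 / t - 1)⁻¹ / T ^ 2 * (x - T) * (1 / 2) ^ l := by ring

theorem PrefixFree.weight_lt_of_notMem {S : Set (List Bool)} (hS : PrefixFree S) {T x c : ℝ}
    (hT : 0 < T) (hT1 : T ≤ 1) (hc : 0 ≤ c)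
    (hdiff : ∀ l, weight x l - weight T l ≤ c * (1 / 2) ^ l)
    {D : Finset (List Bool)} (hD : ∀ q ∈ D, q ∈ S) {p : List Bool} (hp : p ∈ S) (hpD : p ∉ D)
    (hlt : ∑' q : S, weight T (q : List Bool).length < ∑ q ∈ D, weight x q.length) :
    weight T p.length < c := by
  have hle : weight T p.length + ∑ q ∈ D, weight T q.length ≤
      ∑' q : S, weight T (q : List Bool).length := by
    rw [← Finset.sum_cons (f := fun q : List Bool => weight T q.length) hpD]
    exact hS.sum_weight_le_tsum hT hT1 (Finset.forall_mem_cons hpD _ |>.2 ⟨hp, hD⟩)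
  have hsum : ∑ q ∈ D, weight x q.length - ∑ q ∈ D, weight T q.length ≤ c := calc
    _ ≤ ∑ q ∈ D, c * (1 / 2) ^ q.length := by
        rw [← Finset.sum_sub_distrib]
        exact Finset.sum_le_sum fun q _ => hdiff q.length
    _ = c * ∑ q ∈ D, (1 / 2) ^ q.length := (Finset.mul_sum _ _ _).symm
    _ ≤ c := mul_le_of_le_one_right hc (hS.mono hD).sum_half_pow_length_le_one
  linarith

theorem mul_sub_logb_lt_of_weight_lt {T K : ℝ} (hT : 0 < T) (hK : 0 < K) {l n : ℕ}
    (h : weight T l < K * (1 / 2) ^ n) : T * (n - Real.logb 2 K) < l := by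
  have hpow : K * (1 / 2) ^ n = (2 : ℝ) ^ (Real.logb 2 K - n) := by
    rw [Real.rpow_sub two_pos, Real.rpow_logb two_pos (by norm_num) hK, Real.rpow_natCast,
      one_div, inv_pow, div_eq_mul_inv]
  rw [weight, hpow, Real.rpow_lt_rpow_left_iff one_lt_two, div_lt_iff₀ hT] at h
  linarith

end Temperature

/-! ### Randomness -/

theorem IsOptimal.exists_missing_program {U : Computer} (hU : IsOptimal U) {T : ℝ} (hT : 0 < T)
    (hZ : RightComputable (∑' p, zterm U T p)) :
    ∃ d : ℕ, ∀ b, T < upperEndpoint b → upperEndpoint b ≤ 1 →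
      ∃ (p : List Bool) (D : Finset (List Bool)), p ∈ U.domain ∧ (∀ q ∈ D, q ∈ U.domain) ∧
        p ∉ D ∧ p.length ≤ H U b + d ∧
        ∑' q, zterm U T q < ∑ q ∈ D, weight (upperEndpoint b) q.length := by
  obtain ⟨g, hgc, hZg, hlim⟩ := hZ
  have hg (k : ℕ) : 0 ≤ g k := by
    exact_mod_cast (tsum_nonneg fun p => (weight_pos T _).le).trans (hZg k)
  obtain ⟨φ, hφ, hsearch⟩ := exists_partrec_fresh_output U.partrec hgc hg
  obtain ⟨d, hd⟩ := hU.exists_H_le_add hφ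
  obtain ⟨p₀, hp₀, hne⟩ := hU.exists_mem_domain_ne_nil
  refine ⟨d, fun b hTb hb => ?_⟩
  obtain ⟨hsound, hcomplete⟩ := hsearch b
  obtain ⟨F, hF, hlt⟩ := PrefixFree.exists_tsum_weight_lt_sum U.prefixFree hp₀ hne hT hTb hb
  obtain ⟨t, ht⟩ := Part.dom_iff_mem.1 (hcomplete _ F hlim hF hlt)
  obtain ⟨D, k, hD, hk⟩ := hsound t ht
  obtain ⟨p, hp, hlen⟩ := hU.exists_mem_length_eq_H t
  exact ⟨p, D, Part.dom_iff_mem.2 ⟨t, hp⟩, fun q hq => (hD q hq).1, fun hpD => (hD p hpD).2 hp,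
    hlen.trans_le (hd b t ht), (hZg k).trans_lt hk⟩

/-- **Theorem (paper Thm 16).** For `T ∈ (0,1)`, if `Z(T)` is right-computable
then `T` is weakly Chaitin `T`-random: there is `c ∈ ℝ` with
`T·n − c ≤ H(T_n)` for all `n ≥ 1`. -/
theorem rightComputable_Z_imp_weaklyChaitinRandom (U : Computer)
    (hU : IsOptimal U) (T : ℝ) (hT0 : 0 < T) (hT1 : T < 1)
    (hZ : RightComputable (∑' p, zterm U T p)) :
    ∃ c : ℝ, ∀ n : ℕ, 1 ≤ n → T * n - c ≤ (H U (bits T n) : ℝ) := by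
  obtain ⟨d, hd⟩ := hU.exists_missing_program hT0 hZ
  obtain ⟨t, hTt, ht1⟩ := exists_between hT1
  obtain ⟨K, hK, hdiff⟩ := exists_weight_sub_weight_le hT0 hTt.le ht1
  suffices h : ∀ᶠ n : ℕ in atTop, T * n - H U (bits T n) ≤ T * Real.logb 2 K + d by
    obtain ⟨c, hc⟩ := (isBoundedUnder_of_eventually_le h).bddAbove_range
    exact ⟨c, fun n _ => sub_le_comm.1 (hc (Set.mem_range_self n))⟩
  have hpow : Tendsto (fun n : ℕ => (1 / 2 : ℝ) ^ n) atTop (𝓝 0) :=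
    tendsto_pow_atTop_nhds_zero_of_lt_one one_half_pos.le one_half_lt_one
  filter_upwards [hpow.eventually_lt_const (sub_pos.2 hTt)] with n hn
  have hfract : Int.fract T = T := Int.fract_eq_self.2 ⟨hT0.le, hT1⟩
  have hTx : T < upperEndpoint (bits T n) := hfract.symm.trans_lt (fract_lt_upperEndpoint_bits T n)
  have hx : upperEndpoint (bits T n) ≤ T + (1 / 2) ^ n := by
    simpa only [hfract] using upperEndpoint_bits_le T n
  have hxt : upperEndpoint (bits T n) ≤ t := by linarith
  obtain ⟨p, D, hp, hD, hpD, hlen, hlt⟩ := hd (bits T n) hTx (hxt.trans ht1.le)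
  have hweight : weight T p.length < K * (1 / 2) ^ n :=
    (PrefixFree.weight_lt_of_notMem U.prefixFree hT0 hT1.le (mul_pos hK (sub_pos.2 hTx)).le
      (hdiff _ hTx.le hxt) hD hp hpD hlt).trans_le (by gcongr; linarith)
  have hlen_real : (p.length : ℝ) ≤ H U (bits T n) + d := by exact_mod_cast hlen
  linarith [mul_sub_logb_lt_of_weight_lt hT0 hK hweight]
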